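/- arXiv:dg-ga/9602010 — 2 statements merged into one kernel-verified Lean document; each statement's English description precedes it below -/
import Mathlib

section
/- Let (M, K) be a discrete differential manifold with M finite. If (M, K) is infinite dimensional, i.e. K^r ≠ ∅ for every r ≥ 0, then the relation ⪯ on M is not antisymmetric: there exist i, j ∈ M with i ≠ j, i ⪯ j and j ⪯ i. -/
/-- An admissible sequence over `M`: a nonempty tuple with consecutive entries distinct. -/
def Admissible {M : Type*} (l : List M) : Prop := l ≠ [] ∧ l.Chain' (· ≠ ·)

/-- A discrete differential manifold structure on `M`: a set `K` of admissible
sequences (the nonvanishing basic forms) containing every grade-0 sequence `(i)`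
and closed under passing to admissible (not necessarily contiguous) subsequences. -/
structure IsDDM {M : Type*} (K : Set (List M)) : Prop where
  adm : ∀ l ∈ K, Admissible l
  singletons : ∀ i : M, [i] ∈ K
  downClosed : ∀ l ∈ K, ∀ l' : List M, Admissible l' → l'.Sublist l → l' ∈ K

/-- The reflexive relation `⪯` on `M`: `i ⪯ j` iff `i = j` or `(i,j) ∈ K¹`. -/
def pre {M : Type*} (K : Set (List M)) (i j : M) : Prop := i = j ∨ [i, j] ∈ K

/-! An element of `K` with more than `|M|` entries repeats some entry `i`. The entry `j` right after
the first `i` differs from `i`, so `(i, j, i)` is a subsequence. Closure under admissible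
subsequences makes any two entries of an element of `K` related by `⪯` in the order in which they
occur, whence `i ⪯ j ⪯ i`. -/

theorem exists_rel_and_sublist_of_duplicate {α : Type*} {R : α → α → Prop} {l : List α} {a : α}
    (haa : ¬ R a a) (hl : l.IsChain R) (ha : List.Duplicate a l) :
    ∃ b, R a b ∧ [a, b, a].Sublist l := by
  induction ha with
  | @cons_mem t ha =>
    obtain _ | ⟨b, t⟩ := t
    · exact absurd ha List.not_mem_nil
    have hab : R a b := hl.rel
    have hat : a ∈ t := (List.mem_cons.1 ha).resolve_left fun h => haa (h ▸ hab)
    exact ⟨b, hab, ((List.singleton_sublist.2 hat).cons_cons b).cons_cons a⟩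
  | @cons_duplicate c t _ ih =>
    obtain ⟨b, hab, hsub⟩ := ih hl.tail
    exact ⟨b, hab, hsub.cons c⟩

theorem IsDDM.pairwise_pre {M : Type*} {K : Set (List M)} (hK : IsDDM K) {l : List M}
    (hl : l ∈ K) : l.Pairwise (pre K) := by
  refine List.pairwise_iff_forall_sublist.2 fun {i j} hsub => or_iff_not_imp_left.2 fun hij => ?_
  exact hK.downClosed l hl [i, j] ⟨List.cons_ne_nil _ _, List.isChain_pair.2 hij⟩ hsub

theorem ddm_infinite_dim_not_antisymm_general {M : Type*} (K : Set (List M)) (hK : IsDDM K)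
    (hrepeat : ∃ l ∈ K, ¬ l.Nodup) :
    ∃ i j : M, i ≠ j ∧ pre K i j ∧ pre K j i := by
  obtain ⟨l, hl, hdup⟩ := hrepeat
  obtain ⟨i, hi⟩ := List.exists_duplicate_iff_not_nodup.2 hdup
  obtain ⟨j, hij, hsub⟩ :=
    exists_rel_and_sublist_of_duplicate (not_not_intro rfl) (hK.adm l hl).2 hi
  have hpre : [i, j, i].Pairwise (pre K) := (hK.pairwise_pre hl).sublist hsub
  exact ⟨i, j, hij, List.rel_of_pairwise_cons hpre List.mem_cons_self,
    List.rel_of_pairwise_cons hpre.of_cons List.mem_cons_self⟩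

/-- Lemma 4, first part: if a discrete differential manifold on a
finite set `M` is infinite dimensional (`Kʳ ≠ ∅` for every `r`), then `⪯` is not
antisymmetric. -/
theorem ddm_infinite_dim_not_antisymm {M : Type*} [Fintype M] [Nonempty M]
    (K : Set (List M)) (hK : IsDDM K)
    (hinf : ∀ r : ℕ, ∃ l ∈ K, l.length = r + 1) :
    ∃ i j : M, i ≠ j ∧ pre K i j ∧ pre K j i := by
  obtain ⟨l, hl, hlen⟩ := hinf (Fintype.card M)
  exact ddm_infinite_dim_not_antisymm_general K hK
    ⟨l, hl, fun hnodup => hnodup.length_le_card.not_gt (by lia)⟩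
end

section
/- Let P be a geometric simplicial complex with finitely many faces in a finite-dimensional real vector space, and let |P| be its polyhedron. For all x, y ∈ |P|, the intersection V_x ∩ V_y of the star-neighborhoods is either empty or equal to V_z for some z ∈ |P|. Consequently, the simplicial covering T = {V_x : x ∈ |P|} is a base (and not merely a prebase) of the topology τ it generates on |P|. -/
open TopologicalSpace

noncomputable section

variable {E : Type*} [NormedAddCommGroup E] [NormedSpace ℝ E]

/-- The star `St(x)` of a point `x` of the polyhedron `|P|`, viewed inside `|P|`
(which carries the subspace topology from `E`): the union of the convex hulls of
the faces whose convex hull contains `x`. -/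
def starNbhd (P : Geometry.SimplicialComplex ℝ E) (x : P.space) : Set P.space :=
  {y : P.space | ∃ s ∈ P.faces,
    (x : E) ∈ convexHull ℝ (s : Set E) ∧ (y : E) ∈ convexHull ℝ (s : Set E)}

/-- The star-neighborhood `V_x = Int_{|P|} St(x)`, the interior of the star taken
in the polyhedron `|P|` with its metric (subspace) topology. -/
def simpV (P : Geometry.SimplicialComplex ℝ E) (x : P.space) : Set P.space :=
  interior (starNbhd P x)

/-- The simplicial covering `T = {V_x : x ∈ |P|}`. -/
def simpCov (P : Geometry.SimplicialComplex ℝ E) : Set (Set P.space) :=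
  {U : Set P.space | ∃ x : P.space, U = simpV P x}

/-- The topology `τ` on `|P|` generated by the simplicial covering `T`. -/
def tauP (P : Geometry.SimplicialComplex ℝ E) : TopologicalSpace P.space :=
  TopologicalSpace.generateFrom (simpCov P)

end

/-!
The set `V_x` is the interior of the closed star and can be larger than the open star, so it is
described through facets: writing `F(x)` for the set of facets whose hull contains `x`, we have
`y ∈ V_x` iff `F(y) ⊆ F(x)`. Indeed local finiteness gives `F(w) ⊆ F(y)` for all `w` near `y`.
Conversely, moving from `y ∈ V_x` slightly towards the centroid of some `t ∈ F(y)` gives a point of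
the star in the relative interior of `t`; a face containing both this point and `x` contains `t`,
hence is `t`.

If `V_x ∩ V_y` is nonempty, then `x` and `y` lie in the hull of a common facet. Hulls of subsets of
the vertices of a simplex are extreme in it, so the midpoint `z` of `x` and `y` satisfies
`F(z) = F(x) ∩ F(y)`, which says `V_z = V_x ∩ V_y`.
-/

open scoped Topology

section ConvexHull

variable {𝕜 E : Type*} [Field 𝕜] [LinearOrder 𝕜] [IsStrictOrderedRing 𝕜] [AddCommGroup E]
  [Module 𝕜 E] {t u : Finset E}

lemma sum_smul_mem_convexHull_iff_of_subset (ht : AffineIndependent 𝕜 ((↑) : t → E)) (hu : u ⊆ t)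
    {w : E → 𝕜} (hw₀ : ∀ v ∈ t, 0 ≤ w v) (hw₁ : ∑ v ∈ t, w v = 1) :
    ∑ v ∈ t, w v • v ∈ convexHull 𝕜 (u : Set E) ↔ ∀ v ∈ t, v ∉ u → w v = 0 := by
  classical
  refine ⟨fun hmem v hvt hvu ↦ ?_, fun hw ↦ ?_⟩
  · obtain ⟨c, -, hc₁, hc⟩ := Finset.mem_convexHull'.1 hmem
    have hsum : ∑ v ∈ t, w v = ∑ v ∈ t, if v ∈ u then c v else 0 := by
      simp [Finset.inter_eq_right.2 hu, hw₁, hc₁]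
    have hpoint : ∑ v ∈ t, w v • v = ∑ v ∈ t, (if v ∈ u then c v else 0) • v := by
      simp [ite_smul, Finset.inter_eq_right.2 hu, hc]
    simpa [hvu] using ht.eq_of_sum_eq_sum_subtype hsum hpoint v hvt
  · refine Finset.mem_convexHull'.2 ⟨w, fun v hv ↦ hw₀ v (hu hv), ?_, ?_⟩
    · rw [Finset.sum_subset hu hw, hw₁]
    · exact Finset.sum_subset hu fun v hvt hvu ↦ by rw [hw v hvt hvu, zero_smul]

lemma isExtreme_convexHull_of_subset (ht : AffineIndependent 𝕜 ((↑) : t → E)) (hu : u ⊆ t) :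
    IsExtreme 𝕜 (convexHull 𝕜 (t : Set E)) (convexHull 𝕜 (u : Set E)) := by
  refine ⟨convexHull_mono (Finset.coe_subset.2 hu), fun x hx y hy z hz hxyz ↦ ?_⟩
  obtain ⟨a, ha₀, ha₁, rfl⟩ := Finset.mem_convexHull'.1 hx
  obtain ⟨b, hb₀, hb₁, rfl⟩ := Finset.mem_convexHull'.1 hy
  obtain ⟨α, β, hα, hβ, hαβ, rfl⟩ := hxyz
  have hcomb : α • ∑ v ∈ t, a v • v + β • ∑ v ∈ t, b v • v = ∑ v ∈ t, (α * a v + β * b v) • v := by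
    simp only [add_smul, mul_smul, Finset.sum_add_distrib, Finset.smul_sum]
  have hcomb₀ : ∀ v ∈ t, 0 ≤ α * a v + β * b v := fun v hv ↦
    add_nonneg (mul_nonneg hα.le (ha₀ v hv)) (mul_nonneg hβ.le (hb₀ v hv))
  have hcomb₁ : ∑ v ∈ t, (α * a v + β * b v) = 1 := by
    rw [Finset.sum_add_distrib, ← Finset.mul_sum, ← Finset.mul_sum, ha₁, hb₁, mul_one, mul_one, hαβ]
  rw [hcomb, sum_smul_mem_convexHull_iff_of_subset ht hu hcomb₀ hcomb₁] at hz
  refine (sum_smul_mem_convexHull_iff_of_subset ht hu ha₀ ha₁).2 fun v hvt hvu ↦ ?_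
  have hαa : α * a v = 0 := ((add_eq_zero_iff_of_nonneg (mul_nonneg hα.le (ha₀ v hvt))
    (mul_nonneg hβ.le (hb₀ v hvt))).1 (hz v hvt hvu)).1
  exact (mul_eq_zero.1 hαa).resolve_left hα.ne'

lemma eq_of_centroid_mem_convexHull (ht : AffineIndependent 𝕜 ((↑) : t → E)) (hu : u ⊆ t)
    (hne : t.Nonempty) (hmem : t.centroid 𝕜 id ∈ convexHull 𝕜 (u : Set E)) : u = t := by
  have hsum : ∑ v ∈ t, t.centroidWeights 𝕜 v = 1 :=
    t.sum_centroidWeights_eq_one_of_nonempty 𝕜 hne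
  rw [t.centroid_eq_centerMass hne, Finset.centerMass_eq_of_sum_1 _ _ hsum] at hmem
  have hzero := (sum_smul_mem_convexHull_iff_of_subset ht hu (fun v _ ↦ by simp) hsum).1 hmem
  refine hu.antisymm fun v hvt ↦ ?_
  by_contra hvu
  simpa [hne.ne_empty] using hzero v hvt hvu

end ConvexHull

section Facets

variable {𝕜 E : Type*} [Field 𝕜] [LinearOrder 𝕜] [IsStrictOrderedRing 𝕜] [AddCommGroup E]
  [Module 𝕜 E] {P : Geometry.SimplicialComplex 𝕜 E} {s t : Finset E} {x y z : E}

lemma isExtreme_convexHull_inter_of_mem_faces (hs : s ∈ P.faces) (ht : t ∈ P.faces) :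
    IsExtreme 𝕜 (convexHull 𝕜 (t : Set E))
      (convexHull 𝕜 (s : Set E) ∩ convexHull 𝕜 (t : Set E)) := by
  classical
  rw [P.convexHull_inter_convexHull hs ht, ← Finset.coe_inter]
  exact isExtreme_convexHull_of_subset (P.indep ht) Finset.inter_subset_right

lemma subset_of_centroid_mem_convexHull (hs : s ∈ P.faces) (ht : t ∈ P.faces)
    (hmem : t.centroid 𝕜 id ∈ convexHull 𝕜 (s : Set E)) : t ⊆ s := by
  classical
  have hne : t.Nonempty := P.nonempty_of_mem_faces ht
  have hinter : t.centroid 𝕜 id ∈ convexHull 𝕜 ((s ∩ t : Finset E) : Set E) := by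
    rw [Finset.coe_inter]
    exact P.inter_subset_convexHull hs ht ⟨hmem, t.centroid_mem_convexHull hne⟩
  exact Finset.inter_eq_right.1
    (eq_of_centroid_mem_convexHull (P.indep ht) Finset.inter_subset_right hne hinter)

/-- The facets around a point `x`, that is, those whose convex hull contains `x`. The
star-neighborhoods are compared through these sets. -/
def facetsAt (P : Geometry.SimplicialComplex 𝕜 E) (x : E) : Set (Finset E) :=
  {t ∈ P.facets | x ∈ convexHull 𝕜 (t : Set E)}

lemma facetsAt_eq_inter_of_mem_openSegment (ht : t ∈ P.faces)
    (hx : x ∈ convexHull 𝕜 (t : Set E)) (hy : y ∈ convexHull 𝕜 (t : Set E))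
    (hz : z ∈ openSegment 𝕜 x y) : facetsAt P z = facetsAt P x ∩ facetsAt P y := by
  have hzt : z ∈ convexHull 𝕜 (t : Set E) :=
    (convex_convexHull 𝕜 _).openSegment_subset hx hy hz
  refine Set.Subset.antisymm ?_ ?_
  · rintro s ⟨hs, hzs⟩
    have hext := isExtreme_convexHull_inter_of_mem_faces hs.1 ht
    exact ⟨⟨hs, (hext.left_mem_of_mem_openSegment hx hy ⟨hzs, hzt⟩ hz).1⟩,
      ⟨hs, (hext.right_mem_of_mem_openSegment hx hy ⟨hzs, hzt⟩ hz).1⟩⟩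
  · rintro s ⟨⟨hs, hxs⟩, -, hys⟩
    exact ⟨hs, (convex_convexHull 𝕜 _).openSegment_subset hxs hys hz⟩

end Facets

section StarNeighborhoods

variable {E : Type*} [NormedAddCommGroup E] [NormedSpace ℝ E]
  {P : Geometry.SimplicialComplex ℝ E} {x y : P.space}

/-- Local finiteness of a simplicial complex `P`: every point of `|P|` has a neighborhood in `|P|`
meeting the convex hulls of only finitely many faces. The topology on `|P|` is the subspace
topology, as in `simpV`, so this is stronger than every vertex lying in finitely many faces. -/
def HasLocallyFiniteFaces (P : Geometry.SimplicialComplex ℝ E) : Prop :=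
  LocallyFinite fun s : P.faces ↦ {x : P.space | (x : E) ∈ convexHull ℝ (s : Set E)}

lemma hasLocallyFiniteFaces_of_finite (hfin : P.faces.Finite) : HasLocallyFiniteFaces P :=
  have := hfin.to_subtype
  locallyFinite_of_finite _

lemma HasLocallyFiniteFaces.facetsAt_nonempty (hP : HasLocallyFiniteFaces P) (x : P.space) :
    (facetsAt P (x : E)).Nonempty := by
  obtain ⟨s, hs, hxs⟩ := Geometry.SimplicialComplex.mem_space_iff.1 x.2
  obtain ⟨t, -, hxt, hmax⟩ := (hP.point_finite x).exists_le_maximal (a := ⟨s, hs⟩) hxs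
  refine ⟨t, ⟨t.2, fun r hr htr ↦ ?_⟩, hxt⟩
  exact htr.antisymm (hmax (y := ⟨r, hr⟩) (convexHull_mono (Finset.coe_subset.2 htr) hxt) htr)

lemma HasLocallyFiniteFaces.eventually_facetsAt_subset (hP : HasLocallyFiniteFaces P)
    (y : P.space) : ∀ᶠ w : P.space in 𝓝 y, facetsAt P (w : E) ⊆ facetsAt P (y : E) := by
  have hclosed (s : P.faces) : IsClosed {x : P.space | (x : E) ∈ convexHull ℝ (s : Set E)} :=
    (s.1.finite_toSet.isClosed_convexHull ℝ).preimage continuous_subtype_val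
  filter_upwards [hP.iInter_compl_mem_nhds hclosed y] with w hw t ⟨ht, hwt⟩
  refine ⟨ht, ?_⟩
  by_contra hyt
  exact Set.mem_iInter₂.1 hw ⟨t, ht.1⟩ hyt hwt

lemma facetsAt_subset_of_mem_simpV (hy : y ∈ simpV P x) :
    facetsAt P (y : E) ⊆ facetsAt P (x : E) := by
  rintro t ⟨ht, hyt⟩
  have hct : t.centroid ℝ id ∈ convexHull ℝ (t : Set E) :=
    t.centroid_mem_convexHull (P.nonempty_of_mem_faces ht.1)
  obtain ⟨O, hO, hOstar⟩ := mem_nhds_subtype _ _ _ |>.1 (mem_interior_iff_mem_nhds.1 hy)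
  have hclosure : (y : E) ∈ closure (openSegment ℝ (t.centroid ℝ id) (y : E)) :=
    segment_subset_closure_openSegment (right_mem_segment ℝ _ _)
  obtain ⟨q, hqO, hq⟩ := mem_closure_iff_nhds.1 hclosure O hO
  have hqt : q ∈ convexHull ℝ (t : Set E) :=
    (convex_convexHull ℝ _).openSegment_subset hct hyt hq
  obtain ⟨s, hs, hxs, hqs⟩ : (⟨q, P.convexHull_subset_space ht.1 hqt⟩ : P.space) ∈ starNbhd P x :=
    hOstar hqO
  have hcs : t.centroid ℝ id ∈ convexHull ℝ (s : Set E) :=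
    ((isExtreme_convexHull_inter_of_mem_faces hs ht.1).left_mem_of_mem_openSegment hct hyt
      ⟨hqs, hqt⟩ hq).1
  have hts : t = s := ht.2 hs (subset_of_centroid_mem_convexHull hs ht.1 hcs)
  exact ⟨ht, hts ▸ hxs⟩

lemma HasLocallyFiniteFaces.mem_simpV_iff (hP : HasLocallyFiniteFaces P) :
    y ∈ simpV P x ↔ facetsAt P (y : E) ⊆ facetsAt P (x : E) := by
  refine ⟨facetsAt_subset_of_mem_simpV, fun hyx ↦ mem_interior_iff_mem_nhds.2 ?_⟩
  filter_upwards [hP.eventually_facetsAt_subset y] with w hwy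
  obtain ⟨t, ht⟩ := hP.facetsAt_nonempty w
  exact ⟨t, ht.1.1, (hyx (hwy ht)).2, ht.2⟩

lemma HasLocallyFiniteFaces.simpV_inter_simpV (hP : HasLocallyFiniteFaces P) (x y : P.space) :
    simpV P x ∩ simpV P y = ∅ ∨ ∃ z : P.space, simpV P x ∩ simpV P y = simpV P z := by
  refine (Set.eq_empty_or_nonempty _).imp_right ?_
  rintro ⟨w, hwx, hwy⟩
  obtain ⟨t, ht⟩ := hP.facetsAt_nonempty w
  have hxt := (facetsAt_subset_of_mem_simpV hwx ht).2
  have hyt := (facetsAt_subset_of_mem_simpV hwy ht).2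
  have hz : midpoint ℝ (x : E) y ∈ openSegment ℝ (x : E) y := midpoint_mem_openSegment _ _
  have hzt := (convex_convexHull ℝ _).openSegment_subset hxt hyt hz
  refine ⟨⟨_, P.convexHull_subset_space ht.1.1 hzt⟩, Set.ext fun v ↦ ?_⟩
  rw [Set.mem_inter_iff, hP.mem_simpV_iff, hP.mem_simpV_iff, hP.mem_simpV_iff,
    facetsAt_eq_inter_of_mem_openSegment ht.1.1 hxt hyt hz, Set.subset_inter_iff]

end StarNeighborhoods

theorem simplicial_covering_is_basis_general {E : Type*} [NormedAddCommGroup E] [NormedSpace ℝ E]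
    (P : Geometry.SimplicialComplex ℝ E) (hP : HasLocallyFiniteFaces P) :
    (∀ x y : P.space, simpV P x ∩ simpV P y = ∅ ∨
      ∃ z : P.space, simpV P x ∩ simpV P y = simpV P z) ∧
    @TopologicalSpace.IsTopologicalBasis P.space (tauP P) (simpCov P) := by
  refine ⟨hP.simpV_inter_simpV, @IsTopologicalBasis.mk _ (tauP P) _ ?_ ?_ rfl⟩
  · rintro _ ⟨x, rfl⟩ _ ⟨y, rfl⟩ w hw
    rcases hP.simpV_inter_simpV x y with hempty | ⟨z, hz⟩
    · exact absurd (hempty ▸ hw) (Set.notMem_empty w)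
    · exact ⟨simpV P z, ⟨z, rfl⟩, hz ▸ hw, hz.ge⟩
  · exact Set.eq_univ_of_forall fun x ↦ ⟨simpV P x, ⟨x, rfl⟩, hP.mem_simpV_iff.2 subset_rfl⟩

/-- for a geometric simplicial complex `P` with finitely many faces
in a finite-dimensional real vector space, the intersection `V_x ∩ V_y` of two
star-neighborhoods is either empty or equal to some `V_z`; consequently the
simplicial covering `T` is a base (not merely a prebase) of the topology `τ` it
generates on `|P|`. -/
theorem simplicial_covering_is_basis {E : Type*} [NormedAddCommGroup E]
    [NormedSpace ℝ E] [FiniteDimensional ℝ E]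
    (P : Geometry.SimplicialComplex ℝ E) (hfin : P.faces.Finite) :
    (∀ x y : P.space, simpV P x ∩ simpV P y = ∅ ∨
      ∃ z : P.space, simpV P x ∩ simpV P y = simpV P z) ∧
    @TopologicalSpace.IsTopologicalBasis P.space (tauP P) (simpCov P) :=
  simplicial_covering_is_basis_general P (hasLocallyFiniteFaces_of_finite hfin)
end
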